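/- arXiv:2108.09962 — 2 statements merged into one kernel-verified Lean document; each statement's English description precedes it below -/
import Mathlib

section
/- Let d, r, t, n be positive integers with n > d + r and r >= (t-1)d, and let F be a family of n sets from F_{t,d} (indexed by {1,...,n}, repetitions allowed). If more than g_d(n,t,r) of the (d+1)-element subfamilies of F are intersecting, then F contains an intersecting subfamily of size at least d + r + 1. -/
/-- `S ∈ 𝓕_{t,d}`: `S ⊆ (ℝ^d)^t` is a Cartesian product `A_1 × ⋯ × A_t`
of convex sets `A_i ⊆ ℝ^d`. -/
def IsProdOfConvex (t d : ℕ) (S : Set (Fin t → Fin d → ℝ)) : Prop :=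
  ∃ A : Fin t → Set (Fin d → ℝ), (∀ j, Convex ℝ (A j)) ∧ S = {x | ∀ j, x j ∈ A j}

/-- `g_d(n,t,r) = C(n,d+1) - min { ∑_i C(n_i, d+1) : n_1 + ⋯ + n_t = n - r + (t-1)d }`. -/
noncomputable def gFun (d n t r : ℕ) : ℕ :=
  n.choose (d + 1) -
    sInf {m : ℕ | ∃ f : Fin t → ℕ,
      (∑ i, f i) = n - r + (t - 1) * d ∧ m = ∑ i, (f i).choose (d + 1)}

/-!
Suppose that no `d + r + 1` members intersect.  A subfamily of the products intersects iff it is a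
face of the nerve of the `j`-th factors for every `j`, so it suffices to find `∑ j, C(n_j, d + 1)`
sets of size `d + 1` that are non-faces of one of these nerves.

For a single nerve this is the upper bound theorem: if all faces inside `V` have at most `d + r`
vertices, then `V` contains at least `C(|V| - r, d + 1)` non-faces of size `d + 1`.  Put the
vertices in general position in `ℝ^(|V| - r)`.  It is enough that every alternating `(d + 1)`-form
vanishing on all non-faces is zero, since the space of these forms has dimension
`C(|V| - r, d + 1)`.  Treat the faces of size `d + 1` by decreasing distance of their intersection
from the origin.  By Helly's theorem the nearest point `p` of the intersection over a face `T` is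
already the nearest point of the intersection over some `d`-subset `A` of `T`.  The form, contracted
with `A`, kills every vertex of `A`, and every vertex whose set misses `p`, because adding such a
vertex to `A` gives a non-face or a face farther away.  These are at least `|V| - r` vectors in
general position, so the contraction is zero.

For several nerves, peel off a largest face `K` of the first one inside `V`, count the non-faces of
the first nerve in `V`, and continue with the other nerves inside `K`, all of whose subsets are
faces of the first nerve.
-/

open Finset Module

section VanishesOn

variable {R M N κ : Type*} [CommRing R] [AddCommGroup M] [Module R M] [AddCommGroup N] [Module R N]
  {φ : M [⋀^κ]→ₗ[R] N} {s u : Set M}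

/-- The alternating form `φ` vanishes on `s` if it is zero on all tuples of vectors from `s`,
equivalently if its restriction to the span of `s` is zero.  This avoids choosing orderings of
`s`. -/
def VanishesOn (φ : M [⋀^κ]→ₗ[R] N) (s : Set M) : Prop :=
  ∀ v : κ → M, (∀ i, v i ∈ s) → φ v = 0

theorem vanishesOn_range [Finite κ] {v : κ → M} (hv : φ v = 0) :
    VanishesOn φ (Set.range v) := by
  classical
  have := Fintype.ofFinite κ
  intro w hw
  choose σ hσ using hw
  obtain rfl : v ∘ σ = w := funext hσ
  by_cases hinj : Function.Injective σ
  · have hperm := φ.map_perm v (Equiv.ofBijective σ hinj.bijective_of_finite)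
    rwa [hv, smul_zero] at hperm
  · exact φ.map_eq_zero_of_not_injective _ fun h => hinj h.of_comp

theorem vanishesOn_image_of_card_lt {ι : Type*} [Fintype κ] (g : ι → M) {A : Finset ι}
    (hA : #A < Fintype.card κ) : VanishesOn φ (g '' A) := by
  intro v hv
  choose a haA hav using hv
  obtain ⟨i, -, j, -, hij, haij⟩ :=
    exists_ne_map_eq_of_card_lt_of_maps_to (s := univ) hA fun i _ => haA i
  exact φ.map_eq_zero_of_eq v (by rw [← hav i, ← hav j, haij]) hij

theorem vanishesOn_image_of_forall_card_eq {ι : Type*} [Fintype κ] {g : ι → M} {V : Finset ι}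
    (h : ∀ T ⊆ V, #T = Fintype.card κ → VanishesOn φ (g '' T)) : VanishesOn φ (g '' V) := by
  classical
  intro v hv
  choose a haV hav using hv
  by_cases hinj : Function.Injective a
  · refine h (univ.image a) (image_subset_iff.2 fun i _ => haV i)
      (card_image_of_injective univ hinj) v fun i => ⟨a i, ?_, hav i⟩
    exact mem_coe.2 (mem_image_of_mem a (mem_univ i))
  · obtain ⟨i, j, haij, hij⟩ := Function.not_injective_iff.1 hinj
    exact φ.map_eq_zero_of_eq v (by rw [← hav i, ← hav j, haij]) hij

theorem vanishesOn_insert_of_span_eq_top [Nonempty κ] (hu : Submodule.span R u = ⊤)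
    (h : ∀ y ∈ u, VanishesOn φ (insert y s)) (x : M) : VanishesOn φ (insert x s) := by
  classical
  intro v hv
  by_cases hinj : Function.Injective v
  swap
  · exact φ.map_eq_zero_of_not_injective v hinj
  obtain ⟨i, hi⟩ : ∃ i, ∀ j ≠ i, v j ∈ s := by
    by_cases hx : ∃ i, v i = x
    · obtain ⟨i, rfl⟩ := hx
      exact ⟨i, fun j hj => (hv j).resolve_left (hinj.ne hj)⟩
    · exact ⟨Classical.arbitrary κ, fun j _ => (hv j).resolve_left fun hj => hx ⟨j, hj⟩⟩
  have hcontract : φ.toMultilinearMap.toLinearMap v i = 0 := by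
    refine LinearMap.ext_on hu fun y hy => h y hy _ fun j => ?_
    rcases eq_or_ne j i with rfl | hj
    · simp
    · simp [hj, hi j hj]
  simpa using LinearMap.congr_fun hcontract (v i)

theorem VanishesOn.eq_zero [Finite κ] (h : VanishesOn φ s) (hs : Submodule.span R s = ⊤) :
    φ = 0 :=
  AlternatingMap.coe_multilinearMap_injective <|
    MultilinearMap.ext_of_span_eq_top (g := fun _ => ((↑) : s → M)) (fun _ => by simpa using hs)
      fun v => h _ fun i => (v i).2

end VanishesOn

theorem choose_finrank_le_card_of_forall_eq_zero {R M κ : Type*} [CommRing R] [Nontrivial R]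
    [AddCommGroup M] [Module R M] [Module.Free R M] [Module.Finite R M] [Fintype κ] {k : ℕ}
    (v : κ → Fin k → M) (hv : ∀ φ : M [⋀^Fin k]→ₗ[R] R, (∀ s, φ (v s) = 0) → φ = 0) :
    (finrank R M).choose k ≤ Fintype.card κ := by
  let evalAt : (M [⋀^Fin k]→ₗ[R] R) →ₗ[R] κ → R :=
    { toFun φ s := φ (v s)
      map_add' _ _ := rfl
      map_smul' _ _ := rfl }
  have hinj : Function.Injective evalAt :=
    (injective_iff_map_eq_zero evalAt).2 fun φ hφ => hv φ (congrFun hφ)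
  have hforms : finrank R (M [⋀^Fin k]→ₗ[R] R) = (finrank R M).choose k := by
    rw [exteriorPower.alternatingMapLinearEquiv.finrank_eq, Module.finrank_linearMap,
      exteriorPower.finrank_eq, finrank_self, mul_one]
  simpa only [hforms, finrank_fintype_fun_eq_card] using
    LinearMap.finrank_le_finrank_of_injective hinj

theorem exists_forall_span_image_eq_top (K : Type*) {ι : Type*} [Field K] [Infinite K]
    [Countable ι] (m : ℕ) :
    ∃ g : ι → Fin m → K, ∀ U : Finset ι, m ≤ #U → Submodule.span K (g '' U) = ⊤ := by
  obtain ⟨e, he⟩ := exists_injective_nat ι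
  let c : ι → K := Infinite.natEmbedding K ∘ e
  have hc : Function.Injective c := (Infinite.natEmbedding K).injective.comp he
  refine ⟨fun i j => c i ^ (j : ℕ), fun U hU => ?_⟩
  obtain ⟨W, hWU, hW⟩ := exists_subset_card_eq hU
  let w : Fin m → ι := fun i => (W.equivFinOfCardEq hW).symm i
  have hw : Function.Injective w := Subtype.val_injective.comp (Equiv.injective _)
  have hindep : LinearIndependent K (Matrix.vandermonde (c ∘ w)).row :=
    Matrix.linearIndependent_rows_of_det_ne_zero
      (Matrix.det_vandermonde_ne_zero_iff.2 (hc.comp hw))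
  rw [eq_top_iff, ← hindep.span_eq_top_of_card_eq_finrank' (by simp)]
  refine Submodule.span_mono ?_
  rintro _ ⟨i, rfl⟩
  exact ⟨w i, hWU (Subtype.prop _), rfl⟩

section UpperBound

variable {ι α : Type*} {P Q : Finset ι → Prop} {V K : Finset ι} {d k r : ℕ}

open scoped Classical in
/-- The `k`-element subsets of `V` that are not faces of the complex `P`.  A simplicial complex is
encoded by the predicate of being a face. -/
noncomputable def nonfaces (P : Finset ι → Prop) (k : ℕ) (V : Finset ι) : Finset (Finset ι) :=
  {S ∈ powersetCard k V | ¬ P S}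

theorem mem_nonfaces {S : Finset ι} : S ∈ nonfaces P k V ↔ (S ⊆ V ∧ #S = k) ∧ ¬ P S := by
  simp only [nonfaces, mem_filter, mem_powersetCard]

theorem card_filter_add_card_nonfaces (P : Finset ι → Prop) [DecidablePred P] (k : ℕ)
    (V : Finset ι) :
    #{S ∈ powersetCard k V | P S} + #(nonfaces P k V) = (#V).choose k := by
  rw [nonfaces, card_filter_add_card_filter_not, card_powersetCard]

/-- The conclusion of the upper bound theorem for `d`-Leray complexes: if the faces inside `V` have
at most `d + r` vertices, then `V` has as many non-faces of size `d + 1` as in the extremal example,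
the join of a simplex on `r` vertices with the `(d - 1)`-skeleton of a simplex. -/
def UpperBoundProperty (d : ℕ) (P : Finset ι → Prop) : Prop :=
  ∀ (V : Finset ι) (r : ℕ), (∀ S ⊆ V, P S → #S ≤ d + r) →
    (#V - r).choose (d + 1) ≤ #(nonfaces P (d + 1) V)

open scoped Classical in
/-- The weight `N` sweeps the complex `P`, a variant of Wegner's `d`-collapsibility: when the faces
of size `d + 1` are removed by decreasing weight, then at the turn of `T` some `d`-subset `A` of `T`
is contained only in remaining ones that lie in a single face `B`. -/
def IsSweep [Preorder α] (d : ℕ) (V : Finset ι) (P : Finset ι → Prop) (N : Finset ι → α) : Prop :=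
  ∀ T ⊆ V, #T = d + 1 → P T → ∃ A ⊆ T, #A = d ∧ ∃ B ⊆ V, A ⊆ B ∧ P B ∧
    ∀ x ∈ V, x ∉ B → P (insert x A) → N T < N (insert x A)

theorem IsSweep.vanishesOn [Finite ι] [Preorder α] {N : Finset ι → α} (hN : IsSweep d V P N)
    (hr : ∀ S ⊆ V, P S → #S ≤ d + r) {R M M' : Type*} [CommRing R] [AddCommGroup M] [Module R M]
    [AddCommGroup M'] [Module R M'] {g : ι → M}
    (hg : ∀ U : Finset ι, #V - r ≤ #U → Submodule.span R (g '' U) = ⊤)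
    {φ : M [⋀^Fin (d + 1)]→ₗ[R] M'} (hφ : ∀ S ∈ nonfaces P (d + 1) V, VanishesOn φ (g '' S))
    {T : Finset ι} (hTV : T ⊆ V) (hT : #T = d + 1) : VanishesOn φ (g '' T) := by
  classical
  induction T using (Finite.wellFounded_of_trans_of_irrefl (InvImage (· > ·) N)).induction with
  | _ T ih =>
  by_cases hPT : P T
  swap
  · exact hφ T (mem_nonfaces.2 ⟨⟨hTV, hT⟩, hPT⟩)
  obtain ⟨A, hAT, hA, B, hBV, hAB, hPB, hlt⟩ := hN T hTV hT hPT
  have hcard : #V - r ≤ #(A ∪ V \ B) := by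
    have hdisj : Disjoint A (V \ B) := disjoint_of_subset_left hAB disjoint_sdiff
    have hB := hr B hBV hPB
    rw [card_union_of_disjoint hdisj, card_sdiff_of_subset hBV]
    omega
  have hvanish : ∀ x ∈ A ∪ V \ B, VanishesOn φ (g '' (insert x A : Finset ι)) := by
    intro x hx
    by_cases hxA : x ∈ A
    · rw [insert_eq_of_mem hxA]
      exact vanishesOn_image_of_card_lt g (by simp [hA])
    obtain ⟨hxV, hxB⟩ := mem_sdiff.1 ((mem_union.1 hx).resolve_left hxA)
    have hsub : insert x A ⊆ V := insert_subset hxV (hAT.trans hTV)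
    have hxcard : #(insert x A) = d + 1 := by rw [card_insert_of_notMem hxA, hA]
    by_cases hPx : P (insert x A)
    · exact ih _ (hlt x hxV hxB hPx) hsub hxcard
    · exact hφ _ (mem_nonfaces.2 ⟨⟨hsub, hxcard⟩, hPx⟩)
  obtain ⟨x, -, rfl⟩ := exists_eq_insert_iff.2 ⟨hAT, by rw [hA, hT]⟩
  rw [coe_insert, Set.image_insert_eq]
  refine vanishesOn_insert_of_span_eq_top (hg _ hcard) ?_ (g x)
  rintro _ ⟨y, hy, rfl⟩
  simpa only [coe_insert, Set.image_insert_eq] using hvanish y hy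

theorem IsSweep.choose_le_card_nonfaces [Finite ι] [Preorder α] {N : Finset ι → α}
    (hN : IsSweep d V P N) (hr : ∀ S ⊆ V, P S → #S ≤ d + r) :
    (#V - r).choose (d + 1) ≤ #(nonfaces P (d + 1) V) := by
  obtain ⟨g, hg⟩ := exists_forall_span_image_eq_top (ι := ι) ℝ (#V - r)
  have henum (S : nonfaces P (d + 1) V) : ∃ v : Fin (d + 1) → ι, Set.range v = S.1 := by
    have hS := (mem_nonfaces.1 S.2).1.2
    exact ⟨Subtype.val ∘ (S.1.equivFinOfCardEq hS).symm,
      (EquivLike.range_comp _ _).trans Subtype.range_coe⟩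
  choose v hv using henum
  have hzero (φ : (Fin (#V - r) → ℝ) [⋀^Fin (d + 1)]→ₗ[ℝ] ℝ) (hφ : ∀ S, φ (g ∘ v S) = 0) :
      φ = 0 := by
    have hnonface : ∀ S ∈ nonfaces P (d + 1) V, VanishesOn φ (g '' S) := fun S hS => by
      simpa only [Set.range_comp, hv] using vanishesOn_range (hφ ⟨S, hS⟩)
    have hV : VanishesOn φ (g '' V) := vanishesOn_image_of_forall_card_eq fun T hTV hT =>
      hN.vanishesOn hr hg hnonface hTV (by simpa using hT)
    exact hV.eq_zero (hg V (Nat.sub_le _ _))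
  simpa using choose_finrank_le_card_of_forall_eq_zero (fun S => g ∘ v S) hzero

theorem card_nonfaces_add_card_nonfaces_le (hP : Antitone P) (hKV : K ⊆ V) (hK : P K) :
    #(nonfaces P k V) + #(nonfaces Q k K) ≤ #(nonfaces (fun S => P S ∧ Q S) k V) := by
  classical
  have hdisj : Disjoint (nonfaces P k V) (nonfaces Q k K) := disjoint_left.2 fun S hSP hSQ =>
    (mem_nonfaces.1 hSP).2 (hP (mem_nonfaces.1 hSQ).1.1 hK)
  rw [← card_union_of_disjoint hdisj]
  refine card_le_card fun S hS => ?_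
  simp only [mem_union, mem_nonfaces] at hS ⊢
  rcases hS with ⟨hSV, hSP⟩ | ⟨⟨hSK, hSk⟩, hSQ⟩
  · exact ⟨hSV, fun h => hSP h.1⟩
  · exact ⟨⟨hSK.trans hKV, hSk⟩, fun h => hSQ h.2⟩

theorem UpperBoundProperty.choose_le_or_exists_face (hP : UpperBoundProperty d P) (V : Finset ι)
    (r : ℕ) :
    (#V - r).choose (d + 1) ≤ #(nonfaces P (d + 1) V) ∨
      ∃ K ⊆ V, P K ∧ d + r ≤ #K ∧ (#V - (#K - d)).choose (d + 1) ≤ #(nonfaces P (d + 1) V) := by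
  classical
  by_cases hlarge : ∃ K ⊆ V, P K ∧ d + r ≤ #K
  · obtain ⟨K₀, hK₀V, hPK₀, hK₀⟩ := hlarge
    obtain ⟨K, hK, hmax⟩ := exists_max_image {S ∈ V.powerset | P S} card
      ⟨K₀, by simp [hK₀V, hPK₀]⟩
    simp only [mem_filter, mem_powerset, and_imp] at hK hmax
    have hKcard : d + r ≤ #K := hK₀.trans (hmax K₀ hK₀V hPK₀)
    refine Or.inr ⟨K, hK.1, hK.2, hKcard, hP V _ fun S hSV hS => ?_⟩
    exact (hmax S hSV hS).trans (by omega)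
  · exact Or.inl (hP V r fun S hSV hS => le_of_not_ge fun h => hlarge ⟨S, hSV, hS, h⟩)

theorem exists_sum_choose_le_card_nonfaces {t : ℕ} {P : Fin t → Finset ι → Prop}
    (hP : ∀ j, UpperBoundProperty d (P j)) (hanti : ∀ j, Antitone (P j)) (hV : d + r ≤ #V)
    (hr : ∀ S ⊆ V, (∀ j, P j S) → #S ≤ d + r) :
    ∃ f : Fin t → ℕ, ∑ j, f j + (d + r) = #V + t * d ∧
      ∑ j, (f j).choose (d + 1) ≤ #(nonfaces (fun S => ∀ j, P j S) (d + 1) V) := by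
  induction t generalizing V with
  | zero =>
    have := hr V subset_rfl fun j => j.elim0
    refine ⟨0, ?_, by simp⟩
    simp only [univ_eq_empty, sum_empty, zero_mul, zero_add, add_zero]
    omega
  | succ t ih =>
    simp only [Fin.forall_fin_succ] at hP hanti hr ⊢
    rcases hP.1.choose_le_or_exists_face V r with hle | ⟨K, hKV, hK, hKr, hle⟩
    · refine ⟨Fin.cons (#V - r) fun _ => d, ?_, ?_⟩
      · simp only [Fin.sum_cons, sum_const, card_univ, Fintype.card_fin, smul_eq_mul, add_mul]
        omega
      · simp only [Fin.sum_univ_succ, Fin.cons_zero, Fin.cons_succ, Nat.choose_succ_self,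
          sum_const_zero, add_zero]
        refine hle.trans (card_le_card fun S hS => ?_)
        rw [mem_nonfaces] at hS ⊢
        exact ⟨hS.1, fun h => hS.2 h.1⟩
    · obtain ⟨f, hf, hfle⟩ := ih hP.2 hanti.2 hKr fun S hSK hS =>
        hr S (hSK.trans hKV) ⟨hanti.1 hSK hK, hS⟩
      refine ⟨Fin.cons (#V - (#K - d)) f, ?_, ?_⟩
      · have := card_le_card hKV
        simp only [Fin.sum_cons, add_mul]
        omega
      · simp only [Fin.sum_univ_succ, Fin.cons_zero, Fin.cons_succ]
        exact (add_le_add hle hfle).trans (card_nonfaces_add_card_nonfaces_le hanti.1 hKV hK)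

theorem choose_le_gFun_add_sum_choose {n t : ℕ} {f : Fin t → ℕ}
    (hf : ∑ i, f i = n - r + (t - 1) * d) :
    n.choose (d + 1) ≤ gFun d n t r + ∑ i, (f i).choose (d + 1) :=
  Nat.sub_le_iff_le_add.1 (Nat.sub_le_sub_left (Nat.sInf_le (by exact ⟨f, hf, rfl⟩)) _)

theorem card_filter_forall_le_gFun {t : ℕ} {P : Fin t → Finset ι → Prop}
    [DecidablePred fun S => ∀ j, P j S]
    (hP : ∀ j, UpperBoundProperty d (P j)) (hanti : ∀ j, Antitone (P j)) (ht : 0 < t)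
    (hV : d + r ≤ #V) (hr : ∀ S ⊆ V, (∀ j, P j S) → #S ≤ d + r) :
    #{S ∈ powersetCard (d + 1) V | ∀ j, P j S} ≤ gFun d #V t r := by
  obtain ⟨f, hf, hfle⟩ := exists_sum_choose_le_card_nonfaces hP hanti hV hr
  have hsum : ∑ j, f j = #V - r + (t - 1) * d := by
    have := Nat.le_mul_of_pos_left d ht
    rw [Nat.sub_one_mul]
    omega
  have hcompl := card_filter_add_card_nonfaces (fun S => ∀ j, P j S) (d + 1) V
  have hg := choose_le_gFun_add_sum_choose hsum
  omega

end UpperBound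

section Nerve

variable {ι E : Type*}

/-- `S` is a face of the nerve of the family `A`. -/
def IsNerveFace (A : ι → Set E) (S : Finset ι) : Prop :=
  (⋂ i ∈ S, A i).Nonempty

theorem isNerveFace_iff {A : ι → Set E} {S : Finset ι} :
    IsNerveFace A S ↔ ∃ x, ∀ i ∈ S, x ∈ A i := by
  simp only [IsNerveFace, Set.Nonempty, Set.mem_iInter]

theorem antitone_isNerveFace (A : ι → Set E) : Antitone (IsNerveFace A) :=
  fun _ _ hST hT => hT.mono (Set.biInter_subset_biInter_left hST)

theorem isNerveFace_pi {κ : Type*} {E : κ → Type*} (A : ι → ∀ j, Set (E j)) :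
    IsNerveFace (fun i => {x : ∀ j, E j | ∀ j, x j ∈ A i j}) =
      fun S => ∀ j, IsNerveFace (fun i => A i j) S := by
  ext S
  simp only [isNerveFace_iff, Set.mem_ofPred_eq, Classical.skolem]
  exact exists_congr fun x => ⟨fun h j i hi => h i hi j, fun h i hi j => h j i hi⟩

theorem isNerveFace_preimage {F : Type*} {e : E → F} (he : Function.Surjective e)
    (A : ι → Set F) : IsNerveFace (fun i => e ⁻¹' A i) = IsNerveFace A := by
  ext S
  rw [IsNerveFace, IsNerveFace, ← Set.preimage_iInter₂, he.nonempty_preimage]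

theorem exists_isClosed_convex_isNerveFace_eq [Finite ι] [AddCommGroup E] [Module ℝ E]
    [TopologicalSpace E] [IsTopologicalAddGroup E] [ContinuousSMul ℝ E] [T2Space E]
    {A : ι → Set E} (hA : ∀ i, Convex ℝ (A i)) :
    ∃ C : ι → Set E, (∀ i, Convex ℝ (C i)) ∧ (∀ i, IsClosed (C i)) ∧
      IsNerveFace C = IsNerveFace A := by
  choose p hp using fun S : {S // IsNerveFace A S} => isNerveFace_iff.1 S.2
  refine ⟨fun i => convexHull ℝ (p '' {S | i ∈ S.1}), fun i => convex_convexHull ℝ _,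
    fun i => (Set.toFinite _).isClosed_convexHull ℝ,
    funext fun S => propext ⟨fun h => ?_, fun h => ?_⟩⟩
  · refine h.mono (Set.iInter₂_mono fun i _ => convexHull_min ?_ (hA i))
    rintro _ ⟨T, hT, rfl⟩
    exact hp T i hT
  · exact isNerveFace_iff.2
      ⟨p ⟨S, h⟩, fun i hi => subset_convexHull ℝ _ ⟨⟨S, h⟩, hi, rfl⟩⟩

theorem biInter_inter_nonempty_of_forall_card_eq {𝕜 : Type*} [Field 𝕜] [LinearOrder 𝕜]
    [IsStrictOrderedRing 𝕜] [AddCommGroup E] [Module 𝕜 E] [FiniteDimensional 𝕜 E] {C : ι → Set E}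
    {D : Set E} {T : Finset ι} {d : ℕ} (hd : finrank 𝕜 E ≤ d) (hC : ∀ i, Convex 𝕜 (C i))
    (hD : Convex 𝕜 D) (hdT : d ≤ #T) (hT : (⋂ i ∈ T, C i).Nonempty)
    (h : ∀ A ⊆ T, #A = d → ((⋂ i ∈ A, C i) ∩ D).Nonempty) :
    ((⋂ i ∈ T, C i) ∩ D).Nonempty := by
  classical
  have hface (I : Finset (Option ι)) (hI : I ⊆ insertNone T) (hIcard : #I ≤ finrank 𝕜 E + 1) :
      (⋂ o ∈ I, o.elim D C).Nonempty := by
    have hIT : eraseNone I ⊆ T := fun i hi => by simpa using hI (mem_eraseNone.1 hi)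
    by_cases hnone : none ∈ I
    · have hcard : #(eraseNone I) ≤ d := by
        have hI' := card_insertNone (eraseNone I)
        rw [insertNone_eraseNone, insert_eq_of_mem hnone] at hI'
        omega
      obtain ⟨A, hIA, hAT, hA⟩ := exists_subsuperset_card_eq hIT hcard hdT
      refine (h A hAT hA).mono fun x hx => Set.mem_iInter₂.2 fun o ho => ?_
      cases o with
      | none => exact hx.2
      | some i => exact Set.mem_iInter₂.1 hx.1 i (hIA (mem_eraseNone.2 ho))
    · refine hT.mono fun x hx => Set.mem_iInter₂.2 fun o ho => ?_
      cases o with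
      | none => exact absurd ho hnone
      | some i => exact Set.mem_iInter₂.1 hx i (hIT (mem_eraseNone.2 ho))
  have hconv : ∀ o ∈ insertNone T, Convex 𝕜 (o.elim D C) := fun o _ => o.rec hD hC
  refine (Convex.helly_theorem' hconv hface).mono fun x hx => ⟨?_, ?_⟩
  · exact Set.mem_iInter₂.2 fun i hi => Set.mem_iInter₂.1 hx (some i) (some_mem_insertNone.2 hi)
  · exact Set.mem_iInter₂.1 hx none none_mem_insertNone

section StrictConvex

variable [NormedAddCommGroup E] [NormedSpace ℝ E] [StrictConvexSpace ℝ E]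

theorem norm_lt_norm_of_forall_norm_le {s : Set E} {p q : E} (hs : Convex ℝ s) (hp : p ∈ s)
    (hmin : ∀ y ∈ s, ‖p‖ ≤ ‖y‖) (hq : q ∈ s) (hpq : p ≠ q) : ‖p‖ < ‖q‖ := by
  refine (hmin q hq).lt_of_ne fun heq => ?_
  have hmid : (1 / 2 : ℝ) • (p + q) ∈ s := by
    rw [smul_add]
    exact hs hp hq (by norm_num) (by norm_num) (by norm_num)
  exact (hmin _ hmid).not_gt ((norm_midpoint_lt_iff heq).2 hpq)

theorem isSweep_infDist_isNerveFace [FiniteDimensional ℝ E] {d : ℕ} (hd : finrank ℝ E ≤ d)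
    {C : ι → Set E} (hC : ∀ i, Convex ℝ (C i)) (hclosed : ∀ i, IsClosed (C i)) (V : Finset ι) :
    IsSweep d V (IsNerveFace C) fun S => Metric.infDist 0 (⋂ i ∈ S, C i) := by
  classical
  have hnearest (S : Finset ι) (hS : IsNerveFace C S) :
      ∃ p ∈ ⋂ i ∈ S, C i, Metric.infDist 0 (⋂ i ∈ S, C i) = ‖p‖ := by
    have hclosedS : IsClosed (⋂ i ∈ S, C i) := isClosed_biInter fun i _ => hclosed i
    simpa only [dist_zero_left] using hclosedS.exists_infDist_eq_dist hS 0
  intro T hTV hTcard hT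
  obtain ⟨p, hpT, hp⟩ := hnearest T hT
  obtain ⟨A, hAT, hA, hmin⟩ : ∃ A ⊆ T, #A = d ∧ ∀ y ∈ ⋂ i ∈ A, C i, ‖p‖ ≤ ‖y‖ := by
    by_contra! hcloser
    obtain ⟨y, hyT, hyp⟩ := biInter_inter_nonempty_of_forall_card_eq hd hC
      (convex_ball (0 : E) ‖p‖) (by omega) hT fun A hAT hA => by
        simpa only [Set.Nonempty, Set.mem_inter_iff, mem_ball_zero_iff] using hcloser A hAT hA
    have := Metric.infDist_le_dist_of_mem (x := 0) hyT
    rw [hp, dist_zero_left] at this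
    exact this.not_gt (mem_ball_zero_iff.1 hyp)
  have hpT' := Set.mem_iInter₂.1 hpT
  refine ⟨A, hAT, hA, {i ∈ V | p ∈ C i}, filter_subset _ _, ?_, ?_, ?_⟩
  · exact fun i hi => mem_filter.2 ⟨hTV (hAT hi), hpT' i (hAT hi)⟩
  · exact isNerveFace_iff.2 ⟨p, fun i hi => (mem_filter.1 hi).2⟩
  · intro x hxV hxB hx
    obtain ⟨q, hqx, hq⟩ := hnearest _ hx
    have hpq : p ≠ q := fun h =>
      hxB (mem_filter.2 ⟨hxV, h ▸ Set.mem_iInter₂.1 hqx x (mem_insert_self x A)⟩)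
    simp only [hp, hq]
    exact norm_lt_norm_of_forall_norm_le (convex_iInter₂ fun i _ => hC i)
      (Set.biInter_subset_biInter_left hAT hpT) hmin
      (Set.biInter_subset_biInter_left (subset_insert x A) hqx) hpq

end StrictConvex

theorem upperBoundProperty_isNerveFace [Finite ι] [AddCommGroup E] [Module ℝ E]
    [FiniteDimensional ℝ E] {d : ℕ} (hd : finrank ℝ E ≤ d) {A : ι → Set E}
    (hA : ∀ i, Convex ℝ (A i)) : UpperBoundProperty d (IsNerveFace A) := by
  let e : EuclideanSpace ℝ (Fin (finrank ℝ E)) ≃ₗ[ℝ] E := LinearEquiv.ofFinrankEq _ _ (by simp)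
  obtain ⟨C, hC, hclosed, hCA⟩ := exists_isClosed_convex_isNerveFace_eq
    fun i => (hA i).linear_preimage e.toLinearMap
  have hface : IsNerveFace C = IsNerveFace A := hCA.trans (isNerveFace_preimage e.surjective A)
  intro V r hr
  rw [← hface] at hr ⊢
  exact (isSweep_infDist_isNerveFace (by simpa using hd) hC hclosed V).choose_le_card_nonfaces hr

end Nerve

open scoped Classical in
theorem stmt3_general {ι : Type*} [Fintype ι] {d r t : ℕ} {E : Fin t → Type*}
    [∀ j, AddCommGroup (E j)] [∀ j, Module ℝ (E j)] [∀ j, FiniteDimensional ℝ (E j)]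
    (hE : ∀ j, finrank ℝ (E j) ≤ d) (ht : 0 < t) (hr : d + r ≤ Fintype.card ι)
    (F : ι → Set (∀ j, E j))
    (hF : ∀ i, ∃ A : ∀ j, Set (E j), (∀ j, Convex ℝ (A j)) ∧ F i = {x | ∀ j, x j ∈ A j})
    (hcount : gFun d (Fintype.card ι) t r <
      #{S ∈ powersetCard (d + 1) (univ : Finset ι) | (⋂ i ∈ S, F i).Nonempty}) :
    ∃ S : Finset ι, d + r + 1 ≤ #S ∧ (⋂ i ∈ S, F i).Nonempty := by
  choose A hA hFA using hF
  have hfaces : IsNerveFace F = fun S => ∀ j, IsNerveFace (fun i => A i j) S := by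
    rw [funext hFA, isNerveFace_pi]
  by_contra! hsmall
  have hle := card_filter_forall_le_gFun (V := univ) (r := r)
    (fun j => upperBoundProperty_isNerveFace (hE j) fun i => hA i j)
    (fun j => antitone_isNerveFace fun i => A i j) ht hr fun S _ hS => by
      by_contra! hlt
      have hSF : IsNerveFace F S := by rwa [hfaces]
      exact hSF.ne_empty (hsmall S hlt)
  simp only [← congrFun hfaces] at hle
  exact hle.not_gt hcount

open scoped Classical in
/-- Exact fractional Helly theorem for Cartesian products of convex sets. -/
theorem stmt3 (d r t n : ℕ) (hd : 0 < d) (hr : 0 < r) (ht : 0 < t) (hn : d + r < n)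
    (hrt : (t - 1) * d ≤ r)
    (F : Fin n → Set (Fin t → Fin d → ℝ)) (hF : ∀ i, IsProdOfConvex t d (F i))
    (hcount : gFun d n t r <
      ((Finset.powersetCard (d + 1) (Finset.univ : Finset (Fin n))).filter
        (fun S : Finset (Fin n) => (⋂ i ∈ S, F i).Nonempty)).card) :
    ∃ S : Finset (Fin n), d + r + 1 ≤ S.card ∧ (⋂ i ∈ S, F i).Nonempty :=
  stmt3_general (fun _ => (finrank_fin_fun ℝ).le) ht (by simpa using hn.le) F hF
    (by simpa using hcount)
end

section
/- Let d, t, r, n be positive integers with n >= d + r and r > (t-1)d. Then there exists a family F of n sets from F_{t,d} satisfying all of the following: (1) every subfamily of F with at least d + (n - t(d-1))/(r - (t-1)d) sets contains d+1 members with a common point; (2) every intersecting subfamily of F has size at most d + r; (3) exactly g_d(n,t,r) of the (d+1)-element subfamilies of F are intersecting. -/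
/-!
Identify `ℝ ^ d` with the polynomials `p` of degree less than `d`. For small `δ > 0`, Lagrange
interpolation shows that `p (δ ^ k)` nearly equals `p (δ ^ c)` once `d` values `p (δ ^ b)` with
largest index `c < k` are bounded, while these `d` values are arbitrary. Hence a family of slabs
`k ≤ p (δ ^ k) ≤ k + s + 1 / 2` has a common point exactly if no index in it has `d` others more
than `s` below it. So at most `d + s` slabs intersect, exactly `C(m, d + 1)` of the `(d + 1)`-tuples
of the first `m + s` slabs do not, and in a family without intersecting `(d + 1)`-tuples all indices
from the `d`-th on are more than `s` apart.

Placing one such family in each of the `t` factors yields the join of the `t` complexes, in which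
every nonintersecting `(d + 1)`-tuple comes from a single factor. Making the parameters `m` and `s`
of the factors as equal as possible attains the minimum in `g_d(n, t, r)`, by convexity of
`x ↦ C(x, d + 1)`.
-/

section PowerNodes

open Finset Filter Topology Polynomial

theorem tendsto_pow_sub_pow_div_pow_sub_pow {𝕜 : Type*} [Field 𝕜] [TopologicalSpace 𝕜]
    [IsTopologicalDivisionRing 𝕜] {b j k : ℕ} (hjb : j ≠ b) (hjk : j < k) :
    Tendsto (fun δ : 𝕜 => (δ ^ k - δ ^ j) / (δ ^ b - δ ^ j)) (𝓝[≠] 0)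
      (𝓝 (if j < b then 1 else 0)) := by
  have hpow (i : ℕ) : Tendsto (fun δ : 𝕜 => δ ^ (i + 1)) (𝓝[≠] 0) (𝓝 0) := by
    simpa using ((continuous_pow (i + 1)).tendsto (0 : 𝕜)).mono_left nhdsWithin_le_nhds
  have hne : ∀ᶠ δ : 𝕜 in 𝓝[≠] 0, δ ≠ 0 := eventually_mem_nhdsWithin
  rcases lt_or_gt_of_ne hjb with h | h
  · obtain ⟨p, rfl⟩ := Nat.exists_eq_add_of_lt h
    obtain ⟨q, rfl⟩ := Nat.exists_eq_add_of_lt hjk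
    have hlim := ((hpow q).sub_const 1).div ((hpow p).sub_const 1) (by simp)
    simp only [zero_sub, neg_div_neg_eq, div_one] at hlim
    rw [if_pos h]
    refine hlim.congr' (hne.mono fun δ hδ => ?_)
    rw [Pi.div_apply, ← mul_div_mul_left _ _ (pow_ne_zero j hδ)]
    ring
  · obtain ⟨p, rfl⟩ := Nat.exists_eq_add_of_lt h
    obtain ⟨q, rfl⟩ := Nat.exists_eq_add_of_lt (h.trans hjk)
    have hlim := ((hpow q).sub (hpow p)).div ((hpow p).const_sub 1) (by simp)
    simp only [sub_zero, div_one] at hlim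
    rw [if_neg h.not_gt]
    refine hlim.congr' (hne.mono fun δ hδ => ?_)
    rw [Pi.div_apply, ← mul_div_mul_left _ _ (pow_ne_zero b hδ)]
    ring

theorem tendsto_eval_lagrange_basis_pow {𝕜 : Type*} [Field 𝕜] [TopologicalSpace 𝕜]
    [IsTopologicalDivisionRing 𝕜] {D : Finset ℕ} {b c k : ℕ} (hb : b ∈ D)
    (hc : IsGreatest (D : Set ℕ) c) (hck : c < k) :
    Tendsto (fun δ : 𝕜 => (Lagrange.basis D (fun i => δ ^ i) b).eval (δ ^ k)) (𝓝[≠] 0)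
      (𝓝 (if b = c then 1 else 0)) := by
  have hprod : ∏ j ∈ D.erase b, (if j < b then (1 : 𝕜) else 0) = if b = c then 1 else 0 := by
    rw [prod_ite_zero, prod_const_one]
    refine if_congr ⟨fun h => ?_, ?_⟩ rfl rfl
    · by_contra hne
      exact (h c (mem_erase.2 ⟨Ne.symm hne, hc.1⟩)).not_ge (hc.2 hb)
    · rintro rfl j hj
      exact lt_of_le_of_ne (hc.2 (mem_of_mem_erase hj)) (ne_of_mem_erase hj)
  rw [← hprod]
  simp only [Lagrange.basis, Lagrange.basisDivisor, eval_prod, eval_mul, eval_C, eval_sub, eval_X,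
    ← div_eq_inv_mul]
  exact tendsto_finsetProd _ fun j hj => tendsto_pow_sub_pow_div_pow_sub_pow
    (ne_of_mem_erase hj) ((hc.2 (mem_of_mem_erase hj)).trans_lt hck)

theorem pow_injective_of_mem_Ioo {R : Type*} [Semiring R] [PartialOrder R]
    [IsStrictOrderedRing R] {δ : R} (hδ : δ ∈ Set.Ioo 0 1) :
    Function.Injective fun i : ℕ => δ ^ i :=
  (pow_right_strictAnti₀ hδ.1 hδ.2).injective

theorem eventually_abs_eval_pow_sub_le {D : Finset ℕ} {c k : ℕ}
    (hc : IsGreatest (D : Set ℕ) c) (hck : c < k) {ε : ℝ} (hε : 0 < ε) :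
    ∀ᶠ δ : ℝ in 𝓝[>] 0, ∀ p : ℝ[X], p.degree < #D →
      |p.eval (δ ^ k) - p.eval (δ ^ c)| ≤ ε * ∑ b ∈ D, |p.eval (δ ^ b)| := by
  have hbasis : ∀ᶠ δ : ℝ in 𝓝[>] 0, ∀ b ∈ D,
      |(Lagrange.basis D (fun i => δ ^ i) b).eval (δ ^ k) - if b = c then 1 else 0| < ε :=
    (eventually_all_finset D).2 fun b hb =>
      ((tendsto_eval_lagrange_basis_pow hb hc hck).mono_left (nhdsGT_le_nhdsNE 0)).eventually
        (eventually_abs_sub_lt _ hε)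
  filter_upwards [hbasis, Ioo_mem_nhdsGT one_pos] with δ hδ hδ01 p hp
  have heval : p.eval (δ ^ k) =
      ∑ b ∈ D, p.eval (δ ^ b) * (Lagrange.basis D (fun i => δ ^ i) b).eval (δ ^ k) := by
    conv_lhs => rw [Lagrange.eq_interpolate (pow_injective_of_mem_Ioo hδ01).injOn hp]
    simp only [Lagrange.interpolate_apply, eval_finsetSum, eval_mul, eval_C]
  have hevalc : p.eval (δ ^ c) = ∑ b ∈ D, p.eval (δ ^ b) * if b = c then 1 else 0 := by
    simp only [mul_ite, mul_one, mul_zero, sum_ite_eq', if_pos (mem_coe.1 hc.1)]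
  rw [heval, hevalc, ← sum_sub_distrib, mul_sum]
  refine (abs_sum_le_sum_abs _ _).trans (sum_le_sum fun b hb => ?_)
  rw [← mul_sub, abs_mul, mul_comm]
  exact mul_le_mul_of_nonneg_right (hδ b hb).le (abs_nonneg _)

theorem exists_linearMap_interpolating_and_abs_sub_le (d N : ℕ) {ε : ℝ} (hε : 0 < ε) :
    ∃ ℓ : ℕ → (Fin d → ℝ) →ₗ[ℝ] ℝ,
      (∀ D : Finset ℕ, #D ≤ d → ∀ v : ℕ → ℝ, ∃ x, ∀ b ∈ D, ℓ b x = v b) ∧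
      ∀ D ⊆ range N, #D = d → ∀ c, IsGreatest (D : Set ℕ) c → ∀ k < N, c < k → ∀ x,
        |ℓ k x - ℓ c x| ≤ ε * ∑ b ∈ D, |ℓ b x| := by
  have hev : ∀ᶠ δ : ℝ in 𝓝[>] 0, ∀ D ∈ (range N).powerset, ∀ c ∈ D, ∀ k ∈ range N,
      IsGreatest (D : Set ℕ) c → c < k → ∀ p : ℝ[X], p.degree < #D →
        |p.eval (δ ^ k) - p.eval (δ ^ c)| ≤ ε * ∑ b ∈ D, |p.eval (δ ^ b)| := by
    simp only [eventually_all_finset, eventually_imp_distrib_left]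
    exact fun D _ c _ k _ hc hck => eventually_abs_eval_pow_sub_le hc hck hε
  obtain ⟨δ, hδ, hδ01⟩ := (hev.and (Ioo_mem_nhdsGT one_pos)).exists
  let e := degreeLTEquiv ℝ d
  refine ⟨fun k => leval (δ ^ k) ∘ₗ (degreeLT ℝ d).subtype ∘ₗ e.symm.toLinearMap,
    fun D hD v => ?_, fun D hDN hD c hc k hkN hck x => ?_⟩
  · have hinj : Set.InjOn (fun i : ℕ => δ ^ i) D := (pow_injective_of_mem_Ioo hδ01).injOn
    have hdeg : Lagrange.interpolate D (fun i => δ ^ i) v ∈ degreeLT ℝ d := mem_degreeLT.2 <|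
      (Lagrange.degree_interpolate_lt v hinj).trans_le (by exact_mod_cast hD)
    refine ⟨e ⟨_, hdeg⟩, fun b hb => ?_⟩
    simpa only [LinearMap.comp_apply, LinearEquiv.coe_coe, e.symm_apply_apply,
      Submodule.subtype_apply, leval_apply] using Lagrange.eval_interpolate_at_node v hinj hb
  · have hdeg : (e.symm x : ℝ[X]).degree < #D := by
      rw [hD]; exact mem_degreeLT.1 (e.symm x).2
    simpa only [LinearMap.comp_apply, LinearEquiv.coe_coe, Submodule.subtype_apply, leval_apply]
      using hδ D (mem_powerset.2 hDN) c hc.1 k (mem_range.2 hkN) hc hck _ hdeg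

end PowerNodes

section Clustered

open Finset

/-- The faces of the simplicial complex on `ℕ` realised below by slabs in `ℝ ^ d`: the sets in which
fewer than `d` elements lie more than `s` below any given element. -/
def Clustered (d s : ℕ) (S : Finset ℕ) : Prop :=
  ∀ a ∈ S, #{b ∈ S | b + s < a} < d

variable {d s : ℕ} {S U : Finset ℕ}

theorem clustered_of_card_le (h : #S ≤ d) : Clustered d s S := fun a ha =>
  (card_lt_card (filter_ssubset.2 ⟨a, ha, by omega⟩)).trans_le h

theorem Clustered.card_le (h : Clustered d s S) : #S ≤ d + s := by
  rcases S.eq_empty_or_nonempty with rfl | hne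
  · simp
  set a := S.max' hne
  have hlow : #{b ∈ S | b + s < a} < d := h a (S.max'_mem hne)
  have hsub : {b ∈ S | ¬ b + s < a} ⊆ Icc (a - s) a := fun b hb => by
    obtain ⟨hbS, hba⟩ := mem_filter.1 hb
    exact mem_Icc.2 ⟨by omega, S.le_max' b hbS⟩
  have hhigh := card_le_card hsub
  rw [Nat.card_Icc] at hhigh
  have hsum := card_filter_add_card_filter_not (s := S) fun b => b + s < a
  omega

theorem Clustered.insert_iff {a : ℕ} (hU : Clustered d s U) (ha : ∀ b ∈ U, b < a) :
    Clustered d s (insert a U) ↔ #{b ∈ U | b + s < a} < d := by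
  simp only [Clustered, forall_mem_insert, filter_insert, if_neg (Nat.le_add_right a s).not_gt]
  refine and_iff_left fun x hx => ?_
  rw [if_neg (by have := ha x hx; omega)]
  exact hU x hx

theorem not_clustered_insert_iff {a : ℕ} (hU : #U = d) (ha : ∀ b ∈ U, b < a) :
    ¬ Clustered d s (insert a U) ↔ ∀ b ∈ U, b + s < a := by
  rw [(clustered_of_card_le hU.le).insert_iff ha, not_lt, ← card_filter_eq_iff, hU,
    (hU ▸ card_filter_le _ _ : _ ≤ d).ge_iff_eq]

theorem filter_not_clustered_insert {n : ℕ}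
    [DecidablePred fun U => ¬ Clustered d s (insert (n + s) U)] :
    {U ∈ powersetCard d (range (n + s)) | ¬ Clustered d s (insert (n + s) U)} =
      powersetCard d (range n) := by
  ext U
  simp only [mem_filter, mem_powersetCard]
  constructor
  · rintro ⟨⟨hU, hUd⟩, hT⟩
    have hlt := (not_clustered_insert_iff hUd fun b hb => mem_range.1 (hU hb)).1 hT
    exact ⟨fun b hb => mem_range.2 (by have := hlt b hb; omega), hUd⟩
  · rintro ⟨hU, hUd⟩
    have hU' : U ⊆ range (n + s) := hU.trans (range_mono (Nat.le_add_right n s))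
    refine ⟨⟨hU', hUd⟩, (not_clustered_insert_iff hUd fun b hb => mem_range.1 (hU' hb)).2 ?_⟩
    exact fun b hb => Nat.add_lt_add_right (mem_range.1 (hU hb)) s

theorem card_filter_not_clustered (hd : 0 < d) (s n : ℕ)
    [DecidablePred fun T => ¬ Clustered d s T] :
    #{T ∈ powersetCard (d + 1) (range (n + s)) | ¬ Clustered d s T} = n.choose (d + 1) := by
  induction n with
  | zero =>
    rw [zero_add, Nat.choose_zero_succ, card_eq_zero, filter_eq_empty_iff]
    refine fun T hT => not_not.2 fun a ha => ?_
    have hlt := mem_range.1 ((mem_powersetCard.1 hT).1 ha)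
    rwa [filter_eq_empty_iff.2 fun b _ => by omega]
  | succ n ih =>
    have hnot : n + s ∉ range (n + s) := notMem_range_self
    have hmem : ∀ U ∈ powersetCard d (range (n + s)), n + s ∉ U := fun U hU hin =>
      hnot ((mem_powersetCard.1 hU).1 hin)
    rw [Nat.add_right_comm, range_add_one, powersetCard_succ_insert hnot, filter_union,
      card_union_of_disjoint, ih, filter_image, filter_not_clustered_insert, card_image_of_injOn,
      card_powersetCard, card_range, Nat.choose_succ_succ, add_comm]
    · rw [← filter_not_clustered_insert (s := s)]
      intro U hU V hV hUV
      rw [← erase_insert (hmem U (mem_filter.1 hU).1), ← erase_insert (hmem V (mem_filter.1 hV).1)]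
      exact congrArg (fun W => W.erase (n + s)) hUV
    · refine disjoint_filter_filter (disjoint_left.2 fun T hT hT' => ?_)
      obtain ⟨U, -, rfl⟩ := mem_image.1 hT'
      exact hnot ((mem_powersetCard.1 hT).1 (mem_insert_self _ _))

theorem mul_succ_add_le_of_forall_not_clustered {N m : ℕ} (hd : 0 < d) (hS : S ⊆ range N)
    (hcard : #S = d + m) (h : ∀ T ⊆ S, #T = d + 1 → ¬ Clustered d s T) :
    m * (s + 1) + d ≤ N := by
  induction m generalizing S N with
  | zero => simpa [hcard] using card_le_card hS
  | succ m ih =>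
    have hSne : S.Nonempty := card_pos.1 (by omega)
    set a := S.max' hSne
    have haS : a ∈ S := S.max'_mem hSne
    have hR : #(S.erase a) = d + m := by rw [card_erase_of_mem haS, hcard]; rfl
    have hRne : (S.erase a).Nonempty := card_pos.1 (by omega)
    set c := (S.erase a).max' hRne
    have hcR : c ∈ S.erase a := (S.erase a).max'_mem hRne
    have hprev : m * (s + 1) + d ≤ c + 1 :=
      ih (fun b hb => mem_range_succ_iff.2 ((S.erase a).le_max' b hb)) hR
        fun T hT => h T (hT.trans (erase_subset a S))
    have hgap : c + s < a := by
      obtain ⟨U, hcU, hUR, hU⟩ := exists_subsuperset_card_eq (singleton_subset_iff.2 hcR)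
        (by rwa [card_singleton]) (hR ▸ Nat.le_add_right d m)
      have hUa : ∀ b ∈ U, b < a := fun b hb => S.lt_max'_of_mem_erase_max' hSne (hUR hb)
      have hT : #(insert a U) = d + 1 := by
        rw [card_insert_of_notMem fun haU => (hUa a haU).false, hU]
      have hTS : insert a U ⊆ S := insert_subset haS (hUR.trans (erase_subset a S))
      exact (not_clustered_insert_iff hU hUa).1 (h _ hTS hT) c (singleton_subset_iff.1 hcU)
    have haN : a < N := mem_range.1 (hS haS)
    rw [Nat.succ_mul]
    omega

theorem exists_card_filter_le_eq {α : Type*} [LinearOrder α] {S : Finset α} (hd : 0 < d)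
    (hS : d ≤ #S) : ∃ c ∈ S, #{b ∈ S | b ≤ c} = d := by
  induction S using Finset.induction_on_max with
  | empty => exact absurd hd (Nat.eq_zero_of_le_zero hS).not_gt
  | insert a S ha ih =>
    have hcard : #(insert a S) = #S + 1 := card_insert_of_notMem fun haS => (ha a haS).false
    rcases hS.lt_or_eq with h | rfl
    · obtain ⟨c, hc, hcd⟩ := ih (by omega)
      exact ⟨c, mem_insert_of_mem hc, by rwa [filter_insert, if_neg (ha c hc).not_ge]⟩
    · refine ⟨a, mem_insert_self a S, card_filter_eq_iff.2 ?_⟩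
      exact (forall_mem_insert ..).2 ⟨le_rfl, fun b hb => (ha b hb).le⟩

end Clustered

section Slab

open Finset

variable {E : Type*} [AddCommGroup E] [Module ℝ E]

/-- The slab `{x | k ≤ f x ≤ k + s + 1/2}`. The half leaves room for an error of `1/4` on either
side of `k + s + 1/4`, while on slabs of `f` whose indices differ by more than `s` the values of `f`
are still at least `1/2` apart. -/
def slab (f : E →ₗ[ℝ] ℝ) (s k : ℕ) : Set E := f ⁻¹' Set.Icc (k : ℝ) (k + s + 1 / 2)

theorem convex_slab (f : E →ₗ[ℝ] ℝ) (s k : ℕ) : Convex ℝ (slab f s k) :=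
  (convex_Icc _ _).linear_preimage f

/-- Whenever `d` of the functionals `ℓ 0, …, ℓ (N - 1)` have values at most `B` in absolute value at
a point, the later functionals lie there within `1 / 4` of the last of these `d`; the constant is
the margin in the slabs. -/
def NearlyDetermined (d N : ℕ) (B : ℝ) (ℓ : ℕ → E →ₗ[ℝ] ℝ) : Prop :=
  ∀ D ⊆ range N, #D = d → ∀ c, IsGreatest (D : Set ℕ) c → ∀ k < N, c < k → ∀ x,
    (∀ b ∈ D, |ℓ b x| ≤ B) → |ℓ k x - ℓ c x| ≤ 1 / 4

variable {d s N : ℕ} {ℓ : ℕ → E →ₗ[ℝ] ℝ} {S : Finset ℕ}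

theorem abs_le_of_mem_slab {f : E →ₗ[ℝ] ℝ} {k : ℕ} {x : E} (hk : k < N) (hx : x ∈ slab f s k) :
    |f x| ≤ N + s := by
  obtain ⟨hlow, hhigh⟩ := hx
  have hk0 : (0 : ℝ) ≤ k := k.cast_nonneg
  have hkN : (k : ℝ) + 1 ≤ N := by exact_mod_cast hk
  rw [abs_of_nonneg (hk0.trans hlow)]
  linarith

theorem clustered_of_forall_mem_slab (hd : 0 < d) (hℓ : NearlyDetermined d N (N + s) ℓ)
    (hS : S ⊆ range N) {x : E} (hx : ∀ k ∈ S, x ∈ slab (ℓ k) s k) : Clustered d s S := by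
  intro a ha
  by_contra! hcard
  obtain ⟨D, hD, rfl⟩ := exists_subset_card_eq hcard
  have hDS : D ⊆ S := hD.trans (filter_subset _ S)
  have hDne : D.Nonempty := card_pos.1 hd
  have hc := D.isGreatest_max' hDne
  set c := D.max' hDne
  have hca : c + s < a := (mem_filter.1 (hD hc.1)).2
  have hclose : |ℓ a x - ℓ c x| ≤ 1 / 4 :=
    hℓ D (hDS.trans hS) rfl c hc a (mem_range.1 (hS ha)) (by omega) x fun b hb =>
      abs_le_of_mem_slab (mem_range.1 (hS (hDS hb))) (hx b (hDS hb))
  have hca' : (c : ℝ) + s + 1 ≤ a := by exact_mod_cast hca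
  linarith [(abs_le.1 hclose).2, (hx a ha).1, (hx c (hDS hc.1)).2]

theorem exists_forall_mem_slab_of_clustered (hd : 0 < d) (hℓ : NearlyDetermined d N (N + s) ℓ)
    (hinterp : ∀ D : Finset ℕ, #D ≤ d → ∀ v : ℕ → ℝ, ∃ x, ∀ b ∈ D, ℓ b x = v b)
    (hS : S ⊆ range N) (h : Clustered d s S) : ∃ x, ∀ k ∈ S, x ∈ slab (ℓ k) s k := by
  have : (0 : ℝ) ≤ s := s.cast_nonneg
  rcases le_or_gt #S d with hSd | hSd
  · obtain ⟨x, hx⟩ := hinterp S hSd fun k => k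
    exact ⟨x, fun k hk => by rw [slab, Set.mem_preimage, hx k hk]; constructor <;> linarith⟩
  obtain ⟨c, hcS, hD⟩ := exists_card_filter_le_eq hd hSd.le
  set D := {b ∈ S | b ≤ c}
  have hcD : c ∈ D := mem_filter.2 ⟨hcS, le_rfl⟩
  obtain ⟨x, hx⟩ := hinterp D hD.le fun k => if k = c then c + s + 1 / 4 else k
  have hxc : ℓ c x = c + s + 1 / 4 := by rw [hx c hcD, if_pos rfl]
  have hslabD : ∀ b ∈ D, x ∈ slab (ℓ b) s b := fun b hb => by
    rw [slab, Set.mem_preimage, hx b hb]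
    split_ifs with hbc
    · subst hbc; constructor <;> linarith
    · constructor <;> linarith
  refine ⟨x, fun k hk => ?_⟩
  rcases le_or_gt k c with hkc | hck
  · exact hslabD k (mem_filter.2 ⟨hk, hkc⟩)
  have hks : k ≤ c + s := by
    by_contra! hlt
    refine (h k hk).not_ge (hD ▸ card_le_card fun b hb => ?_)
    obtain ⟨hbS, hbc⟩ := mem_filter.1 hb
    exact mem_filter.2 ⟨hbS, by omega⟩
  have hDN : D ⊆ range N := (filter_subset _ S).trans hS
  have hclose := abs_le.1 <| hℓ D hDN hD c ⟨hcD, fun b hb => (mem_filter.1 hb).2⟩ k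
    (mem_range.1 (hS hk)) hck x fun b hb =>
      abs_le_of_mem_slab (mem_range.1 (hDN hb)) (hslabD b hb)
  have hck' : (c : ℝ) + 1 ≤ k := by exact_mod_cast hck
  have hks' : (k : ℝ) ≤ c + s := by exact_mod_cast hks
  constructor <;> linarith [hclose.1, hclose.2]

theorem exists_convex_forall_iInter_nonempty_iff_clustered (hd : 0 < d) (s N : ℕ) :
    ∃ A : ℕ → Set (Fin d → ℝ), (∀ k, Convex ℝ (A k)) ∧
      ∀ S ⊆ range N, ((⋂ k ∈ S, A k).Nonempty ↔ Clustered d s S) := by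
  set M : ℝ := d * (N + s) with hM
  have hM0 : 0 ≤ M := by positivity
  obtain ⟨ℓ, hinterp, hclose⟩ :=
    exists_linearMap_interpolating_and_abs_sub_le d N (ε := 1 / (4 * (M + 1))) (by positivity)
  have hℓ : NearlyDetermined d N (N + s) ℓ := by
    rintro D hDN hD c hc k hk hck x hx
    have hsum : ∑ b ∈ D, |ℓ b x| ≤ M := by
      simpa [hD, hM, mul_add] using sum_le_card_nsmul D _ _ hx
    calc |ℓ k x - ℓ c x| ≤ 1 / (4 * (M + 1)) * ∑ b ∈ D, |ℓ b x| := hclose D hDN hD c hc k hk hck x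
      _ ≤ 1 / (4 * (M + 1)) * (M + 1) := by gcongr; linarith
      _ = 1 / 4 := by field_simp
  refine ⟨fun k => slab (ℓ k) s k, fun k => convex_slab (ℓ k) s k, fun S hS => ?_⟩
  simp only [Set.Nonempty, Set.mem_iInter₂]
  exact ⟨fun ⟨x, hx⟩ => clustered_of_forall_mem_slab hd hℓ hS hx,
    exists_forall_mem_slab_of_clustered hd hℓ hinterp hS⟩

end Slab

section Join

open Finset

variable {ι : Type*} {α : ι → Type*}

/-- The part in `α i` of a finite set of the disjoint union of the `α i`. -/
noncomputable def sigmaFiber (S : Finset (Σ i, α i)) (i : ι) : Finset (α i) :=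
  S.preimage (Sigma.mk i) sigma_mk_injective.injOn

/-- The faces of the join of the simplicial complexes `K i`, whose vertex set is the disjoint union
of theirs. -/
def IsJoinFace (K : ∀ i, Finset (α i) → Prop) (S : Finset (Σ i, α i)) : Prop :=
  ∀ i, K i (sigmaFiber S i)

variable {K : ∀ i, Finset (α i) → Prop} {S T : Finset (Σ i, α i)} {i : ι} {U : Finset (α i)} {d : ℕ}

@[simp]
theorem mem_sigmaFiber {a : α i} : a ∈ sigmaFiber S i ↔ (⟨i, a⟩ : Σ i, α i) ∈ S :=
  mem_preimage

theorem sigmaFiber_subset {V : ∀ i, Finset (α i)} [Fintype ι] (hS : S ⊆ univ.sigma V) (i : ι) :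
    sigmaFiber S i ⊆ V i := fun _ ha => (mem_sigma.1 (hS (mem_sigmaFiber.1 ha))).2

theorem map_sigmaFiber_subset : (sigmaFiber S i).map (.sigmaMk i) ⊆ S :=
  map_subset_iff_subset_preimage.2 fun _ ha => ha

theorem sigmaFiber_map : sigmaFiber (U.map (.sigmaMk i)) i = U := by
  ext a
  simp

theorem sigmaFiber_map_of_ne {j : ι} (h : j ≠ i) : sigmaFiber (U.map (.sigmaMk i)) j = ∅ := by
  ext a
  simp [h.symm]

theorem sum_card_sigmaFiber [Fintype ι] (S : Finset (Σ i, α i)) : ∑ i, #(sigmaFiber S i) = #S := by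
  rw [← card_sigma]
  congr 1
  ext ⟨i, a⟩
  simp

theorem IsJoinFace.card_le [Fintype ι] {m : ι → ℕ} (hS : IsJoinFace K S)
    (hm : ∀ i U, K i U → #U ≤ m i) : #S ≤ ∑ i, m i :=
  sum_card_sigmaFiber S ▸ sum_le_sum fun i _ => hm i _ (hS i)

theorem isJoinFace_map_sigmaMk_iff (hK : ∀ i, K i ∅) :
    IsJoinFace K (U.map (.sigmaMk i)) ↔ K i U := by
  refine ⟨fun h => sigmaFiber_map (U := U) ▸ h i, fun h j => ?_⟩
  rcases eq_or_ne j i with rfl | hj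
  · rwa [sigmaFiber_map]
  · rw [sigmaFiber_map_of_ne hj]
    exact hK j

theorem exists_eq_map_of_not_isJoinFace (hK : ∀ i U, #U ≤ d → K i U) (hT : #T = d + 1)
    (h : ¬ IsJoinFace K T) : ∃ i, ∃ U : Finset (α i), T = U.map (.sigmaMk i) := by
  obtain ⟨i, hi⟩ := not_forall.1 h
  have hd : d < #(sigmaFiber T i) := not_le.1 (mt (hK i _) hi)
  have hTd : #T ≤ #((sigmaFiber T i).map (.sigmaMk i)) := by rwa [card_map, hT]
  exact ⟨i, _, (eq_of_subset_of_card_le map_sigmaFiber_subset hTd).symm⟩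

theorem card_filter_not_isJoinFace [Fintype ι] (hK : ∀ i U, #U ≤ d → K i U)
    (V : ∀ i, Finset (α i)) [DecidablePred fun T => ¬ IsJoinFace K T]
    [∀ i, DecidablePred fun U => ¬ K i U] :
    #{T ∈ powersetCard (d + 1) (univ.sigma V) | ¬ IsJoinFace K T} =
      ∑ i, #{U ∈ powersetCard (d + 1) (V i) | ¬ K i U} := by
  have hK0 (i : ι) : K i ∅ := hK i ∅ (Nat.zero_le d)
  rw [← card_sigma]
  symm
  refine card_bij (fun x _ => x.2.map (.sigmaMk x.1)) ?_ ?_ ?_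
  · rintro ⟨i, U⟩ hU
    simp only [mem_sigma, mem_univ, true_and, mem_filter, mem_powersetCard] at hU ⊢
    obtain ⟨⟨hUV, hUd⟩, hUK⟩ := hU
    refine ⟨⟨fun x hx => ?_, by rwa [card_map]⟩, (isJoinFace_map_sigmaMk_iff hK0).not.2 hUK⟩
    obtain ⟨a, ha, rfl⟩ := mem_map.1 hx
    exact mem_sigma.2 ⟨mem_univ i, hUV ha⟩
  · rintro ⟨i, U⟩ hU ⟨j, W⟩ - hUW
    have hUne : U.Nonempty := by
      simp only [mem_sigma, mem_univ, true_and, mem_filter, mem_powersetCard] at hU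
      exact card_pos.1 (by omega)
    obtain ⟨a, ha⟩ := hUne
    have hij : i = j := by
      obtain ⟨b, -, hb⟩ := mem_map.1 (hUW ▸ mem_map_of_mem (.sigmaMk i) ha :)
      exact (congrArg Sigma.fst hb).symm
    subst hij
    exact congrArg (Sigma.mk i) (map_injective _ hUW)
  · intro T hT
    simp only [mem_filter, mem_powersetCard] at hT
    obtain ⟨⟨hTV, hTd⟩, hTK⟩ := hT
    obtain ⟨i, U, rfl⟩ := exists_eq_map_of_not_isJoinFace hK hTd hTK
    refine ⟨⟨i, U⟩, ?_, rfl⟩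
    simp only [mem_sigma, mem_univ, true_and, mem_filter, mem_powersetCard]
    refine ⟨⟨sigmaFiber_map (U := U) ▸ sigmaFiber_subset hTV i, by rwa [card_map] at hTd⟩, ?_⟩
    exact (isJoinFace_map_sigmaMk_iff hK0).not.1 hTK

theorem exists_eq_map_of_forall_not_isJoinFace (hd : 0 < d) (hK : ∀ i U, #U ≤ d → K i U)
    (hS : d < #S) (h : ∀ T ⊆ S, #T = d + 1 → ¬ IsJoinFace K T) :
    ∃ i, ∃ U : Finset (α i), S = U.map (.sigmaMk i) ∧ ∀ T ⊆ U, #T = d + 1 → ¬ K i T := by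
  obtain ⟨⟨i, a⟩, haS⟩ : S.Nonempty := card_pos.1 (by omega)
  have hfst : ∀ y ∈ S, y.1 = i := by
    classical
    intro y hyS
    obtain ⟨T, hT, hTS, hTd⟩ := exists_subsuperset_card_eq (n := d + 1)
      (insert_subset haS (singleton_subset_iff.2 hyS)) (card_le_two.trans (by omega)) hS
    obtain ⟨j, U, rfl⟩ := exists_eq_map_of_not_isJoinFace hK hTd (h T hTS hTd)
    obtain ⟨b, -, hb⟩ := mem_map.1 (hT (mem_insert_self _ _))
    obtain ⟨c, -, rfl⟩ := mem_map.1 (hT (mem_insert_of_mem (mem_singleton_self y)))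
    exact congrArg Sigma.fst hb
  have hSU : (sigmaFiber S i).map (.sigmaMk i) = S := by
    refine map_sigmaFiber_subset.antisymm fun y hy => ?_
    obtain ⟨j, b⟩ := y
    obtain rfl : j = i := hfst _ hy
    exact mem_map.2 ⟨b, mem_sigmaFiber.2 hy, rfl⟩
  refine ⟨i, sigmaFiber S i, hSU.symm, fun T hT hTd hTK => ?_⟩
  refine h (T.map (.sigmaMk i)) (hSU ▸ map_subset_map.2 hT) (by rwa [card_map]) ?_
  exact (isJoinFace_map_sigmaMk_iff fun i => hK i ∅ (Nat.zero_le d)).2 hTK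

end Join

section Balanced

open Finset

/-- The values of `f` are as equal as possible: any two of them differ by at most `1`. -/
def IsBalanced {ι : Type*} (f : ι → ℕ) : Prop :=
  ∀ i j, f i ≤ f j + 1

variable {ι : Type*} [Fintype ι] {f g : ι → ℕ}

theorem exists_isBalanced_sum_eq (M : ℕ) {t : ℕ} (ht : 0 < t) :
    ∃ f : Fin t → ℕ, IsBalanced f ∧ ∑ j, f j = M := by
  refine ⟨fun j => M / t + if (j : ℕ) < M % t then 1 else 0, fun i j => ?_, ?_⟩
  · dsimp only
    split_ifs <;> omega
  · rw [sum_add_distrib, sum_boole, Fin.card_filter_val_lt, min_eq_right (Nat.mod_lt M ht).le]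
    simpa using Nat.div_add_mod M t

theorem IsBalanced.card_mul_le (hf : IsBalanced f) (j : ι) :
    Fintype.card ι * f j ≤ ∑ i, f i + Fintype.card ι := by
  simpa [sum_add_distrib] using sum_le_sum fun i (_ : i ∈ univ) => hf j i

theorem IsBalanced.sum_lt (hf : IsBalanced f) (j : ι) :
    ∑ i, f i < Fintype.card ι * (f j + 1) := by
  simpa using sum_lt_sum (fun i (_ : i ∈ univ) => hf i j) ⟨j, mem_univ j, (f j).lt_succ_self⟩

-- Convexity, `C(x, d + 1) ≥ C(q, d + 1) + (x - q) * C(q, d)`, rearranged to avoid truncated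
-- subtraction.
theorem choose_succ_add_mul_choose_le (d q x : ℕ) :
    q.choose (d + 1) + x * q.choose d ≤ x.choose (d + 1) + q * q.choose d := by
  rcases le_total q x with h | h
  · induction x, h using Nat.le_induction with
    | base => rfl
    | succ x hqx ih =>
      have hmono : q.choose d ≤ x.choose d := Nat.choose_le_choose d hqx
      rw [Nat.choose_succ_succ', Nat.succ_mul]
      omega
  · induction q, h using Nat.le_induction with
    | base => rfl
    | succ q hxq ih =>
      have hmono : q.choose d ≤ (q + 1).choose d := Nat.choose_le_choose d q.le_succ
      rw [Nat.choose_succ_succ']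
      nlinarith

theorem IsBalanced.sum_choose_le (hf : IsBalanced f) (hfg : ∑ i, f i = ∑ i, g i) (d : ℕ) :
    ∑ i, (f i).choose (d + 1) ≤ ∑ i, (g i).choose (d + 1) := by
  cases isEmpty_or_nonempty ι
  · simp
  obtain ⟨j, -, hj⟩ := exists_min_image univ f univ_nonempty
  set q := f j
  -- At `q` and `q + 1`, the only values of `f`, the convexity inequality is an equality.
  have hsecant (i : ι) :
      (f i).choose (d + 1) + q * q.choose d = q.choose (d + 1) + f i * q.choose d := by
    have hi : f i = q ∨ f i = q + 1 := by
      have := hj i (mem_univ i)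
      have := hf i j
      omega
    rcases hi with h | h <;> rw [h]
    rw [Nat.choose_succ_succ']
    ring
  have hsum_f := sum_congr rfl fun i (_ : i ∈ univ) => hsecant i
  have hsum_g := sum_le_sum fun i (_ : i ∈ univ) => choose_succ_add_mul_choose_le d q (g i)
  simp only [sum_add_distrib, ← sum_mul, hfg] at hsum_f hsum_g
  omega

theorem gFun_eq_of_isBalanced {d t n r : ℕ} {f : Fin t → ℕ} (hf : IsBalanced f)
    (hsum : ∑ j, f j = n - r + (t - 1) * d) :
    gFun d n t r = n.choose (d + 1) - ∑ j, (f j).choose (d + 1) := by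
  refine congrArg (n.choose (d + 1) - ·) (IsLeast.csInf_eq ⟨⟨f, hsum, rfl⟩, ?_⟩)
  rintro _ ⟨g, hg, rfl⟩
  exact hf.sum_choose_le (hsum.trans hg.symm) d

end Balanced

section ProductFamily

open Finset

theorem isProdOfConvex_eval_preimage {t d : ℕ} (j : Fin t) {A : Set (Fin d → ℝ)}
    (hA : Convex ℝ A) : IsProdOfConvex t d (Function.eval j ⁻¹' A) := by
  refine ⟨Function.update (fun _ => Set.univ) j A, fun i => ?_, ?_⟩
  · rcases eq_or_ne i j with rfl | hij
    · rwa [Function.update_self]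
    · rw [Function.update_of_ne hij]
      exact convex_univ
  · ext x
    simp [Function.forall_update_iff (fun _ => Set.univ) fun i B => x i ∈ B]

theorem iInter_eval_preimage_nonempty_iff {ι : Type*} {α E : ι → Type*}
    (A : ∀ i, α i → Set (E i)) (S : Finset (Σ i, α i)) :
    (⋂ y ∈ S, Function.eval y.1 ⁻¹' A y.1 y.2).Nonempty ↔
      ∀ i, (⋂ a ∈ sigmaFiber S i, A i a).Nonempty := by
  simp only [Set.Nonempty, Set.mem_iInter₂, Set.mem_preimage, Function.eval, Classical.skolem,
    Sigma.forall, mem_sigmaFiber]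

theorem exists_embedding_map_univ_eq {α : Type*} {s : Finset α} {n : ℕ} (hs : #s = n) :
    ∃ e : Fin n ↪ α, univ.map e = s := by
  refine ⟨(s.equivFinOfCardEq hs).symm.toEmbedding.trans (.subtype (· ∈ s)), ?_⟩
  rw [← map_map, map_univ_equiv, ← attach_eq_univ, attach_map_val]

theorem exists_isProdOfConvex_forall_iInter_nonempty_iff {t d n : ℕ} (hd : 0 < d)
    (σ : Fin t → ℕ) {N : Fin t → ℕ} (hN : ∑ j, N j = n) :
    ∃ (e : Fin n ↪ Σ _ : Fin t, ℕ) (F : Fin n → Set (Fin t → Fin d → ℝ)),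
      univ.map e = univ.sigma (fun j => range (N j)) ∧ (∀ i, IsProdOfConvex t d (F i)) ∧
        ∀ S : Finset (Fin n), (⋂ i ∈ S, F i).Nonempty ↔
          IsJoinFace (fun j => Clustered d (σ j)) (S.map e) := by
  choose A hconv hA using fun j =>
    exists_convex_forall_iInter_nonempty_iff_clustered hd (σ j) (N j)
  obtain ⟨e, he⟩ := exists_embedding_map_univ_eq
    (s := univ.sigma fun j => range (N j)) (by simpa only [card_sigma, card_range] using hN)
  refine ⟨e, fun i => Function.eval (e i).1 ⁻¹' A (e i).1 (e i).2, he,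
    fun i => isProdOfConvex_eval_preimage _ (hconv _ _), fun S => ?_⟩
  have hS : S.map e ⊆ univ.sigma fun j => range (N j) := he ▸ map_subset_map.2 (subset_univ S)
  have hinter := iInter_eval_preimage_nonempty_iff A (S.map e)
  simp only [mem_map, Set.iInter_exists, Set.biInter_and', Set.iInter_iInter_eq_right] at hinter
  exact hinter.trans (forall_congr' fun j => hA j _ (sigmaFiber_subset hS j))

end ProductFamily

section ClusteredJoin

open Finset

variable {ι : Type*} [Fintype ι] {d : ℕ}

theorem card_filter_isJoinFace_clustered (hd : 0 < d) (σ f : ι → ℕ)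
    [DecidablePred fun T => IsJoinFace (fun j => Clustered d (σ j)) T] :
    #{T ∈ powersetCard (d + 1) (univ.sigma fun j => range (f j + σ j)) |
        IsJoinFace (fun j => Clustered d (σ j)) T} =
      (∑ j, (f j + σ j)).choose (d + 1) - ∑ j, (f j).choose (d + 1) := by
  classical
  have hnonfaces := card_filter_not_isJoinFace (K := fun j => Clustered d (σ j))
    (fun _ _ => clustered_of_card_le) fun j => range (f j + σ j)
  simp only [card_filter_not_clustered hd] at hnonfaces
  rw [← hnonfaces]
  refine Nat.eq_sub_of_add_eq ?_
  rw [card_filter_add_card_filter_not, card_powersetCard, card_sigma]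
  simp only [card_range]

variable {σ f : ι → ℕ}

theorem card_mul_add_lt_of_forall_not_isJoinFace_clustered [Nonempty ι] (hd : 0 < d)
    (hf : IsBalanced f) (hσ : IsBalanced σ) (hfd : Fintype.card ι * d ≤ ∑ j, f j)
    {S : Finset (Σ _ : ι, ℕ)} (hS : S ⊆ univ.sigma fun j => range (f j + σ j))
    (h : ∀ T ⊆ S, #T = d + 1 → ¬ IsJoinFace (fun j => Clustered d (σ j)) T) :
    #S * ∑ j, σ j + Fintype.card ι * d <
      ∑ j, (f j + σ j) + Fintype.card ι + d * ∑ j, σ j := by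
  have hι : 0 < Fintype.card ι := Fintype.card_pos
  rw [sum_add_distrib]
  rcases le_or_gt #S d with hSd | hSd
  · have := Nat.mul_le_mul_right (∑ j, σ j) hSd
    omega
  obtain ⟨m, hm⟩ := Nat.exists_eq_add_of_lt hSd
  obtain ⟨j, U, rfl, hU⟩ :=
    exists_eq_map_of_forall_not_isJoinFace hd (fun _ _ => clustered_of_card_le) hSd h
  rw [card_map] at hm ⊢
  have hUN : U ⊆ range (f j + σ j) := fun a ha =>
    (mem_sigma.1 (hS (mem_map_of_mem _ ha))).2
  have hj : m * (σ j + 1) + d + 1 ≤ f j := by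
    have := mul_succ_add_le_of_forall_not_clustered (m := m + 1) hd hUN hm hU
    rw [Nat.succ_mul] at this
    omega
  have hfj := hf.card_mul_le j
  have hσj := hσ.sum_lt j
  rw [hm]
  nlinarith [Nat.mul_le_mul_left (Fintype.card ι) hj, Nat.mul_le_mul_left m hσj.le]

theorem card_le_of_isJoinFace_clustered {S : Finset (Σ _ : ι, ℕ)}
    (hS : IsJoinFace (fun j => Clustered d (σ j)) S) : #S ≤ Fintype.card ι * d + ∑ j, σ j := by
  simpa [sum_add_distrib] using hS.card_le (m := fun j => d + σ j) fun _ _ => Clustered.card_le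

end ClusteredJoin

section Extremal

open Finset

theorem card_filter_powersetCard_map {α β : Type*} (e : α ↪ β) (s : Finset α) (k : ℕ)
    (p : Finset β → Prop) [DecidablePred p] :
    #{T ∈ powersetCard k s | p (T.map e)} = #{T ∈ powersetCard k (s.map e) | p T} := by
  rw [powersetCard_map, filter_map, card_map]
  rfl

theorem add_add_mul_le_of_add_div_le {d t s n k : ℕ} (ht : 0 < t) (hs : 0 < s)
    (h : (d : ℝ) + (n - t * (d - 1)) / (((t - 1) * d + s : ℕ) - (t - 1) * d) ≤ k) :
    n + t + d * s ≤ k * s + t * d := by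
  have hden : (((t - 1) * d + s : ℕ) : ℝ) - (t - 1) * d = s := by
    push_cast [Nat.cast_sub ht]
    ring
  rw [hden, ← le_sub_iff_add_le', div_le_iff₀ (by exact_mod_cast hs)] at h
  have hreal : (n : ℝ) + t + d * s ≤ k * s + t * d := by linarith
  exact_mod_cast hreal

end Extremal

open scoped Classical in
/-- Extremal family for the fractional Helly theorem for Cartesian products of
convex sets, satisfying a `(p, d+1)`-condition. -/
theorem stmt5 (d t r n : ℕ) (hd : 0 < d) (ht : 0 < t) (hr : 0 < r) (hn : d + r ≤ n)
    (hrt : (t - 1) * d < r) :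
    ∃ F : Fin n → Set (Fin t → Fin d → ℝ),
      (∀ i, IsProdOfConvex t d (F i)) ∧
      (∀ S : Finset (Fin n),
        (d : ℝ) + ((n : ℝ) - (t : ℝ) * ((d : ℝ) - 1)) / ((r : ℝ) - ((t : ℝ) - 1) * (d : ℝ))
          ≤ (S.card : ℝ) →
        ∃ T ⊆ S, T.card = d + 1 ∧ (⋂ i ∈ T, F i).Nonempty) ∧
      (∀ S : Finset (Fin n), (⋂ i ∈ S, F i).Nonempty → S.card ≤ d + r) ∧
      ((Finset.powersetCard (d + 1) (Finset.univ : Finset (Fin n))).filter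
          (fun S : Finset (Fin n) => (⋂ i ∈ S, F i).Nonempty)).card = gFun d n t r := by
  obtain ⟨s, rfl⟩ := Nat.exists_eq_add_of_le hrt.le
  have : Nonempty (Fin t) := ⟨⟨0, ht⟩⟩
  have htd : Fintype.card (Fin t) * d = (t - 1) * d + d := by
    rw [← Nat.add_one_mul, Nat.sub_add_cancel ht, Fintype.card_fin]
  obtain ⟨f, hf, hfsum⟩ := exists_isBalanced_sum_eq (n - ((t - 1) * d + s) + (t - 1) * d) ht
  obtain ⟨σ, hσ, rfl⟩ := exists_isBalanced_sum_eq s ht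
  have hcard : ∑ j, (f j + σ j) = n := by rw [Finset.sum_add_distrib]; omega
  obtain ⟨e, F, he, hF, hFe⟩ := exists_isProdOfConvex_forall_iInter_nonempty_iff hd σ hcard
  refine ⟨F, hF, fun S hS => ?_, fun S hS => ?_, ?_⟩
  · by_contra! hno
    have hsmall := card_mul_add_lt_of_forall_not_isJoinFace_clustered (S := S.map e) hd hf hσ
      (by omega) (he ▸ Finset.map_subset_map.2 S.subset_univ) fun T hT hTd hface => by
        obtain ⟨T, hTS, rfl⟩ := Finset.subset_map_iff.1 hT
        exact ((hFe T).2 hface).ne_empty (hno T hTS (by rwa [Finset.card_map] at hTd))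
    rw [Finset.card_map, hcard, Fintype.card_fin] at hsmall
    exact hsmall.not_ge (add_add_mul_le_of_add_div_le ht (by omega) hS)
  · have hle := card_le_of_isJoinFace_clustered ((hFe S).1 hS)
    rw [Finset.card_map] at hle
    omega
  · simp only [hFe]
    rw [card_filter_powersetCard_map e _ _ (IsJoinFace _), he, card_filter_isJoinFace_clustered hd,
      hcard, gFun_eq_of_isBalanced hf hfsum]
end
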